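/- Let M be a DFAwtl and let w∈L(M) with jc_M(w)=n≥1. Then there exists a word w′∈L(M) which is a rearrangement of w (obtained from w by moving one occurrence of a single letter to an earlier position, so in particular |w′|=|w| and w′ has the same multiset of letters as w) such that jc_M(w′)=n−1. -/

import Mathlib

/-- A deterministic finite automaton with translucent letters (DFAwtl):
`delta` is a partial transition function, `start` the initial state,
`accept` the set of final states. -/
structure DFAwtl (Q V : Type*) where
  delta : Q → V → Option Q
  start : Q
  accept : Set Q

namespace DFAwtl

variable {Q V : Type*}

/-- Sequential step: `(s, a·y) → (p, y)` when `δ(s,a) = p`. -/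
def SeqStep (M : DFAwtl Q V) (c c' : Q × List V) : Prop :=
  ∃ a : V, c.2 = a :: c'.2 ∧ M.delta c.1 a = some c'.1

/-- Jumping step: `(s, x·a·y) ↻ (p, x·y)` when `x ≠ ε`, `δ(s,a) = p`, and
`δ(s,b)` is undefined for every letter `b` occurring in `x`. -/
def JumpStep (M : DFAwtl Q V) (c c' : Q × List V) : Prop :=
  ∃ (x y : List V) (a : V), x ≠ [] ∧ c.2 = x ++ a :: y ∧ c'.2 = x ++ y ∧
    M.delta c.1 a = some c'.1 ∧ ∀ b ∈ x, M.delta c.1 b = none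

/-- Either a sequential or a jumping step. -/
def Step (M : DFAwtl Q V) (c c' : Q × List V) : Prop :=
  M.SeqStep c c' ∨ M.JumpStep c c'

/-- Reflexive–transitive closure of sequential steps (the relation `→*`). -/
def SeqSteps (M : DFAwtl Q V) : Q × List V → Q × List V → Prop :=
  Relation.ReflTransGen M.SeqStep

/-- Reflexive–transitive closure of all steps (the relation `⊨*`). -/
def Steps (M : DFAwtl Q V) : Q × List V → Q × List V → Prop :=
  Relation.ReflTransGen M.Step

/-- `StepsN M c c' k` : configuration `c'` is reachable from `c` by a computation
containing exactly `k` jumping steps. -/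
inductive StepsN (M : DFAwtl Q V) : Q × List V → Q × List V → ℕ → Prop
  | refl (c : Q × List V) : StepsN M c c 0
  | seq {c c' c'' : Q × List V} {n : ℕ} :
      M.SeqStep c c' → StepsN M c' c'' n → StepsN M c c'' n
  | jump {c c' c'' : Q × List V} {n : ℕ} :
      M.JumpStep c c' → StepsN M c' c'' n → StepsN M c c'' (n + 1)

/-- The language accepted by `M`. -/
def lang (M : DFAwtl Q V) : Set (List V) :=
  {w | ∃ f ∈ M.accept, M.Steps (M.start, w) (f, [])}

/-- `M` accepts `w` by a computation with exactly `k` jumping steps. -/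
def AcceptsIn (M : DFAwtl Q V) (w : List V) (k : ℕ) : Prop :=
  ∃ f ∈ M.accept, M.StepsN (M.start, w) (f, []) k

/-- The jump complexity of a word: the (for a deterministic machine, unique)
number of jumping steps in an accepting computation on `w`. -/
noncomputable def jc (M : DFAwtl Q V) (w : List V) : ℕ :=
  sInf {k | M.AcceptsIn w k}

/-- The jump complexity function: the maximal number of jumps over accepted
words of length `n`. -/
noncomputable def JC (M : DFAwtl Q V) (n : ℕ) : ℕ :=
  sSup {k | ∃ w ∈ M.lang, w.length = n ∧ M.jc w = k}

/-- `JC_M` is bounded by a constant. -/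
def ConstBounded (M : DFAwtl Q V) : Prop :=
  ∃ c : ℕ, ∀ w ∈ M.lang, M.jc w ≤ c

/-- Extended (sequential) transition function on words. -/
def deltaStar (M : DFAwtl Q V) (q : Q) (w : List V) : Option Q :=
  w.foldl (fun o a => o.bind fun p => M.delta p a) (some q)

/-- A state `q` is `a`-deficient if `δ(q,a)` is undefined. -/
def Deficient (M : DFAwtl Q V) (q : Q) (a : V) : Prop :=
  M.delta q a = none

/-- The set `⟨q,a⟩` (empty when `δ(q,a)` is defined). -/
def angleSet (M : DFAwtl Q V) (q : Q) (a : V) : Set Q :=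
  {s | M.delta q a = none ∧ ∃ x : List V, x ≠ [] ∧
    M.SeqSteps (q, x) (s, []) ∧ M.Steps (s, a :: x) (q, [])}

/-- The set `[q,a]` (empty when `δ(q,a)` is defined). -/
def bracketSet (M : DFAwtl Q V) (q : Q) (a : V) : Set Q :=
  {s | M.delta q a = none ∧ ∃ x : List V, x ≠ [] ∧
    M.SeqSteps (q, x) (s, []) ∧ M.SeqSteps (s, a :: x) (q, [])}

/-- Every state of the automaton is useful. -/
def AllUseful (M : DFAwtl Q V) : Prop :=
  ∀ q : Q, (∃ x : List V, M.SeqSteps (M.start, x) (q, [])) ∧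
    (∃ (y : List V) (f : Q), f ∈ M.accept ∧ M.SeqSteps ((q : Q), y) (f, []))

/-- `δ(q,x')` is `a`-deficient for every prefix `x'` of `x`. -/
def PrefixDeficient (M : DFAwtl Q V) (q : Q) (a : V) (x : List V) : Prop :=
  ∀ x' : List V, ∀ p : Q, x' <+: x → M.deltaStar q x' = some p → M.delta p a = none

/-- `δ(q,y')` is `a`-deficient for every proper prefix `y'` of `y`. -/
def ProperPrefixDeficient (M : DFAwtl Q V) (q : Q) (a : V) (y : List V) : Prop :=
  ∀ y' : List V, ∀ p : Q, y' <+: y → y' ≠ y → M.deltaStar q y' = some p → M.delta p a = none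

/-- The condition of Claim 2: a pair `(q,a)` with `δ(q,a)` undefined, a nonempty
cycle in `q` visiting only `a`-deficient states, and an accepting path from `q`
reading a word `y` without `a` through `a`-deficient states and then an `a`. -/
def ClaimTwoCondition (M : DFAwtl Q V) (q : Q) (a : V) : Prop :=
  M.delta q a = none ∧
  (∃ x : List V, x ≠ [] ∧ M.SeqSteps (q, x) (q, []) ∧ M.PrefixDeficient q a x) ∧
  (∃ (y z : List V) (f : Q), a ∉ y ∧ f ∈ M.accept ∧
    M.SeqSteps (q, y ++ a :: z) (f, []) ∧ M.ProperPrefixDeficient q a y)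

end DFAwtl

namespace DFAwtl

variable {Q V : Type*}

/-- `p 0, p 1, …, p n = p 0` is a circuit in the transition graph of `M`,
with the `i`-th edge labelled by the letter `a i`. -/
def IsCircuit (M : DFAwtl Q V) (n : ℕ) (p : ℕ → Q) (a : ℕ → V) : Prop :=
  0 < n ∧ p n = p 0 ∧ ∀ i < n, M.delta (p i) (a i) = some (p (i + 1))

/-- The circuit is `x`-jumping: every state of the circuit from which an `x` is read
is `b`-deficient for some letter `b`, and at least one edge is labelled by a letter
other than `x`. -/
def IsXJumpingCircuit (M : DFAwtl Q V) (n : ℕ) (p : ℕ → Q) (a : ℕ → V) (x : V) : Prop :=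
  M.IsCircuit n p a ∧ (∀ i < n, a i = x → ∃ b : V, M.delta (p i) b = none) ∧
    ∃ i < n, a i ≠ x

/-- The state `q` is reachable from the initial state. -/
def ReachableState (M : DFAwtl Q V) (q : Q) : Prop :=
  ∃ u : List V, M.Steps (M.start, u) (q, [])

end DFAwtl
-- end preamble

/-!
Carry out the first jump of an accepting computation sequentially instead: move the letter it reads
to the front of the word remaining at that moment. The sequential steps before it never look past
the letters they read, so they are unaffected, and afterwards the two computations coincide. Since
`M` is deterministic, the computation so obtained is the one counted by `jc`.
-/

theorem append_cons_inj_of_forall_not {α : Type*} {p : α → Prop} {x x' y y' : List α} {a a' : α}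
    (ha : p a) (ha' : p a') (hx : ∀ b ∈ x, ¬p b) (hx' : ∀ b ∈ x', ¬p b)
    (h : x ++ a :: y = x' ++ a' :: y') : x = x' ∧ a = a' ∧ y = y' := by
  rcases List.append_eq_append_iff.1 h with ⟨_ | ⟨b, t⟩, rfl, h'⟩ | ⟨_ | ⟨b, t⟩, rfl, h'⟩
  · simpa using h'
  · obtain ⟨rfl, -⟩ := List.cons.inj h'
    exact absurd ha (hx' a (by simp))
  · simpa [eq_comm] using h'
  · obtain ⟨rfl, -⟩ := List.cons.inj h'
    exact absurd ha' (hx a' (by simp))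

namespace DFAwtl

variable {Q V : Type*} {M : DFAwtl Q V} {c c' d e : Q × List V} {w x x' : List V} {k l : ℕ}

/-- `M.StepOver x c c'`: a step from `c` to `c'` reading the letter right after the translucent
prefix `x`. Sequential steps are those with `x = []`, jumping steps those with `x ≠ []`, which
allows both kinds to be shown deterministic at once. -/
def StepOver (M : DFAwtl Q V) (x : List V) (c c' : Q × List V) : Prop :=
  ∃ (a : V) (y : List V), c.2 = x ++ a :: y ∧ c'.2 = x ++ y ∧
    M.delta c.1 a = some c'.1 ∧ ∀ b ∈ x, M.delta c.1 b = none

theorem seqStep_iff_stepOver_nil : M.SeqStep c c' ↔ M.StepOver [] c c' := by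
  simp [SeqStep, StepOver]

theorem jumpStep_iff_exists_stepOver : M.JumpStep c c' ↔ ∃ x ≠ [], M.StepOver x c c' :=
  ⟨fun ⟨x, y, a, hx, h⟩ ↦ ⟨x, hx, a, y, h⟩, fun ⟨x, hx, a, y, h⟩ ↦ ⟨x, y, a, hx, h⟩⟩

theorem StepOver.unique (h : M.StepOver x c d) (h' : M.StepOver x' c e) : x = x' ∧ d = e := by
  obtain ⟨a, y, hc, hd, ha, hx⟩ := h
  obtain ⟨a', y', hc', he, ha', hx'⟩ := h'
  obtain ⟨rfl, rfl, rfl⟩ : x = x' ∧ a = a' ∧ y = y' :=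
    append_cons_inj_of_forall_not (p := fun b ↦ M.delta c.1 b ≠ none) (by simp [ha])
      (by simp [ha']) (by simpa using hx) (by simpa using hx') (hc.symm.trans hc')
  exact ⟨rfl, Prod.ext (Option.some.inj (ha.symm.trans ha')) (hd.trans he.symm)⟩

theorem SeqStep.unique (h : M.SeqStep c d) (h' : M.SeqStep c e) : d = e :=
  ((seqStep_iff_stepOver_nil.1 h).unique (seqStep_iff_stepOver_nil.1 h')).2

theorem JumpStep.unique (h : M.JumpStep c d) (h' : M.JumpStep c e) : d = e := by
  obtain ⟨x, -, hd⟩ := jumpStep_iff_exists_stepOver.1 h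
  obtain ⟨x', -, he⟩ := jumpStep_iff_exists_stepOver.1 h'
  exact (hd.unique he).2

theorem SeqStep.not_jumpStep (h : M.SeqStep c d) : ¬M.JumpStep c e := by
  intro h'
  obtain ⟨x, hx, he⟩ := jumpStep_iff_exists_stepOver.1 h'
  exact hx (he.unique (seqStep_iff_stepOver_nil.1 h)).1

theorem not_step_nil (q : Q) (c : Q × List V) : ¬M.Step (q, []) c := by
  simp [Step, SeqStep, JumpStep]

theorem StepsN.unique (h : M.StepsN c d k) (h' : M.StepsN c e l)
    (hd : ∀ c', ¬M.Step d c') (he : ∀ c', ¬M.Step e c') : d = e ∧ k = l := by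
  induction h generalizing l with
  | refl =>
    cases h' with
    | refl => exact ⟨rfl, rfl⟩
    | seq s' _ => exact absurd (.inl s') (hd _)
    | jump s' _ => exact absurd (.inr s') (hd _)
  | seq s _ ih =>
    cases h' with
    | refl => exact absurd (.inl s) (he _)
    | seq s' t' => exact ih (s.unique s' ▸ t') hd
    | jump s' _ => exact absurd s' s.not_jumpStep
  | jump s _ ih =>
    cases h' with
    | refl => exact absurd (.inr s) (he _)
    | seq s' _ => exact absurd s s'.not_jumpStep
    | jump s' t' => exact (ih (s.unique s' ▸ t') hd).imp_right (congrArg (· + 1))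

theorem steps_iff_exists_stepsN : M.Steps c d ↔ ∃ k, M.StepsN c d k := by
  constructor
  · intro h
    induction h using Relation.ReflTransGen.head_induction_on with
    | refl => exact ⟨0, .refl _⟩
    | head s _ ih =>
      obtain ⟨k, hk⟩ := ih
      exact s.elim (fun s ↦ ⟨k, .seq s hk⟩) (fun s ↦ ⟨k + 1, .jump s hk⟩)
  · rintro ⟨k, h⟩
    induction h with
    | refl => exact .refl
    | seq s _ ih => exact .head (.inl s) ih
    | jump s _ ih => exact .head (.inr s) ih

theorem mem_lang_iff_exists_acceptsIn : w ∈ M.lang ↔ ∃ k, M.AcceptsIn w k := by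
  simp only [lang, AcceptsIn, Set.mem_ofPred_eq, steps_iff_exists_stepsN]
  tauto

theorem AcceptsIn.unique (h : M.AcceptsIn w k) (h' : M.AcceptsIn w l) : k = l := by
  obtain ⟨f, -, hk⟩ := h
  obtain ⟨g, -, hl⟩ := h'
  exact (hk.unique hl (not_step_nil f) (not_step_nil g)).2

theorem AcceptsIn.jc_eq (h : M.AcceptsIn w k) : M.jc w = k :=
  AcceptsIn.unique (Nat.sInf_mem (s := {l | M.AcceptsIn w l}) ⟨k, h⟩) h

theorem acceptsIn_iff : M.AcceptsIn w k ↔ w ∈ M.lang ∧ M.jc w = k := by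
  refine ⟨fun h ↦ ⟨mem_lang_iff_exists_acceptsIn.2 ⟨k, h⟩, h.jc_eq⟩, ?_⟩
  rintro ⟨hw, rfl⟩
  obtain ⟨l, hl⟩ := mem_lang_iff_exists_acceptsIn.1 hw
  rwa [hl.jc_eq]

theorem StepsN.exists_move_letter (h : M.StepsN c d (k + 1)) :
    ∃ (u v₁ v₂ : List V) (a : V), v₁ ≠ [] ∧ c.2 = u ++ v₁ ++ a :: v₂ ∧
      M.StepsN (c.1, u ++ a :: (v₁ ++ v₂)) d k := by
  generalize hm : k + 1 = m at h
  induction h with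
  | refl => cases hm
  | @seq c c' _ _ s _ ih =>
    obtain ⟨b, hc, hb⟩ := s
    obtain ⟨u, v₁, v₂, a, hv₁, hc', ht⟩ := ih hm
    have hs : M.SeqStep (c.1, b :: (u ++ a :: (v₁ ++ v₂))) (c'.1, u ++ a :: (v₁ ++ v₂)) :=
      ⟨b, rfl, hb⟩
    exact ⟨b :: u, v₁, v₂, a, hv₁, by simp [hc, hc'], .seq hs ht⟩
  | @jump c c' _ _ s t =>
    obtain rfl : k = _ := Nat.succ.inj hm
    obtain ⟨x, y, a, hx, hc, hc', ha, -⟩ := s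
    have hs : M.SeqStep (c.1, a :: (x ++ y)) c' := ⟨a, congrArg (a :: ·) hc'.symm, ha⟩
    exact ⟨[], x, y, a, hx, hc, .seq hs t⟩

theorem AcceptsIn.exists_move_letter (h : M.AcceptsIn w (k + 1)) :
    ∃ (u v₁ v₂ : List V) (a : V), v₁ ≠ [] ∧ w = u ++ v₁ ++ a :: v₂ ∧
      M.AcceptsIn (u ++ a :: (v₁ ++ v₂)) k := by
  obtain ⟨f, hf, h⟩ := h
  obtain ⟨u, v₁, v₂, a, hv₁, hw, h'⟩ := h.exists_move_letter
  exact ⟨u, v₁, v₂, a, hv₁, hw, f, hf, h'⟩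

end DFAwtl

theorem stmt_17_general {Q V : Type*} (M : DFAwtl Q V)
    (w : List V) (hw : w ∈ M.lang) (n : ℕ) (hn : M.jc w = n) (h1 : 1 ≤ n) :
    ∃ (u v₁ v₂ : List V) (c : V), v₁ ≠ [] ∧ w = u ++ v₁ ++ c :: v₂ ∧
      (u ++ c :: (v₁ ++ v₂)) ∈ M.lang ∧
      M.jc (u ++ c :: (v₁ ++ v₂)) = n - 1 := by
  obtain ⟨k, rfl⟩ := Nat.exists_eq_add_of_le' h1
  obtain ⟨u, v₁, v₂, c, hv₁, hw', h⟩ := (DFAwtl.acceptsIn_iff.2 ⟨hw, hn⟩).exists_move_letter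
  exact ⟨u, v₁, v₂, c, hv₁, hw', DFAwtl.acceptsIn_iff.1 h⟩

/-- if `w ∈ L(M)` is accepted with `n ≥ 1` jumps, then moving one
occurrence of a single letter of `w` to an earlier position yields a word
`w' ∈ L(M)` accepted with exactly `n − 1` jumps. -/
theorem stmt_17 {Q V : Type*} [Fintype Q] [Fintype V] (M : DFAwtl Q V)
    (w : List V) (hw : w ∈ M.lang) (n : ℕ) (hn : M.jc w = n) (h1 : 1 ≤ n) :
    ∃ (u v₁ v₂ : List V) (c : V), v₁ ≠ [] ∧ w = u ++ v₁ ++ c :: v₂ ∧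
      (u ++ c :: (v₁ ++ v₂)) ∈ M.lang ∧
      M.jc (u ++ c :: (v₁ ++ v₂)) = n - 1 :=
  stmt_17_general M w hw n hn h1
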